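/- Consider the asynchronous fixed-point setting with T a pseudo-contraction with respect to the block-maximum norm with contraction modulus c ∈ (0,1) and fixed point x⋆. Assume partial asynchronism with parameters B, D ∈ ℕ₀: (1) for each i ∈ [m] and every k ≥ 0, at least one element of {k, k+1, …, k+B} belongs to K_i; (2) k − D ≤ s_{ij,k} ≤ k for all i, j ∈ [m] and all k ∈ K_i; (3) s_{ii,k} = k for all i ∈ [m] and k ∈ K_i. Then for all k ≥ 0, ‖x_k − x⋆‖ ≤ c^{k/(B+D+1)} · ‖x_0 − x⋆‖ in the block-maximum norm. -/

import Mathlib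

/-!
The iterate `x (k + 1) i` was computed at the last update time `κ ≤ k` of block `i`, which is at
most `B` steps old, from information that was at most `D` steps old at that time. Choosing first a
block `i` attaining the norm of the error at time `k + 1`, then a block `j` attaining the norm of
the error of the delayed vector used at time `κ`, bounds the error at time `k + 1` by `c` times the
error at the *single* earlier time `l = s i j κ`, where `k + 1 ≤ l + (B + D + 1)`. A scalar
sequence with this property decays like `c ^ (k / (B + D + 1))`.
-/

theorem le_rpow_div_mul_of_forall_exists_le_mul {V : ℕ → ℝ} {c τ : ℝ} (hc0 : 0 < c) (hc1 : c ≤ 1)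
    (hV0 : 0 ≤ V 0)
    (hV : ∀ k : ℕ, ∃ l ≤ k, (k : ℝ) + 1 ≤ l + τ ∧ V (k + 1) ≤ c * V l) (k : ℕ) :
    V k ≤ c ^ ((k : ℝ) / τ) * V 0 := by
  induction k using Nat.strong_induction_on with
  | _ k ih =>
    rcases k with _ | k
    · simp
    obtain ⟨l, hlk, hkl, hVl⟩ := hV k
    have hτ : 0 < τ := by
      have : (l : ℝ) ≤ k := by exact_mod_cast hlk
      linarith
    have hexp : ((k + 1 : ℕ) : ℝ) / τ ≤ 1 + l / τ := by
      rw [one_add_div hτ.ne', add_comm τ]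
      push_cast
      exact div_le_div_of_nonneg_right hkl hτ.le
    calc V (k + 1) ≤ c * V l := hVl
      _ ≤ c * (c ^ ((l : ℝ) / τ) * V 0) := by gcongr; exact ih l (by omega)
      _ = c ^ (1 + (l : ℝ) / τ) * V 0 := by
        rw [Real.rpow_add hc0, Real.rpow_one, mul_assoc]
      _ ≤ c ^ (((k + 1 : ℕ) : ℝ) / τ) * V 0 :=
        mul_le_mul_of_nonneg_right (Real.rpow_le_rpow_of_exponent_ge hc0 hc1 hexp) hV0

theorem exists_isGreatest_inter_Iic_and_le_add {K : Set ℕ} {B : ℕ} (hK0 : 0 ∈ K)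
    (hgap : ∀ k, ∃ κ ∈ K, k ≤ κ ∧ κ ≤ k + B) (k : ℕ) :
    ∃ κ, IsGreatest (K ∩ Set.Iic k) κ ∧ k ≤ κ + B := by
  obtain ⟨κ, hκ⟩ : ∃ κ, IsGreatest (K ∩ Set.Iic k) κ :=
    BddAbove.exists_isGreatest_of_nonempty (bddAbove_Iic.mono Set.inter_subset_right)
      ⟨0, hK0, k.zero_le⟩
  obtain ⟨l, hlK, hκl, hlB⟩ := hgap (κ + 1)
  have hkl : k < l := by
    by_contra! hlk
    have : l ≤ κ := hκ.2 ⟨hlK, hlk⟩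
    omega
  exact ⟨κ, hκ, by omega⟩

section BlockMaxNorm

variable {ι : Type*} [Fintype ι] [Nonempty ι] {E : ι → Type*}

/-- The weighted block-maximum norm `max_i w i * ‖z i‖` on a product of blocks. It is a plain
function, since the product type already carries the unweighted supremum norm as an instance. -/
noncomputable def blockMaxNorm [∀ i, Norm (E i)] (w : ι → ℝ) (z : ∀ i, E i) : ℝ :=
  Finset.univ.sup' Finset.univ_nonempty fun i => w i * ‖z i‖

theorem mul_norm_le_blockMaxNorm [∀ i, Norm (E i)] (w : ι → ℝ) (z : ∀ i, E i) (i : ι) :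
    w i * ‖z i‖ ≤ blockMaxNorm w z :=
  Finset.le_sup' (fun i => w i * ‖z i‖) (Finset.mem_univ i)

theorem exists_blockMaxNorm_eq_mul_norm [∀ i, Norm (E i)] (w : ι → ℝ) (z : ∀ i, E i) :
    ∃ i, blockMaxNorm w z = w i * ‖z i‖ := by
  obtain ⟨i, -, hi⟩ := Finset.exists_mem_eq_sup' Finset.univ_nonempty fun i => w i * ‖z i‖
  exact ⟨i, hi⟩

theorem blockMaxNorm_nonneg [∀ i, SeminormedAddGroup (E i)] {w : ι → ℝ} (hw : ∀ i, 0 ≤ w i)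
    (z : ∀ i, E i) : 0 ≤ blockMaxNorm w z := by
  obtain ⟨i, hi⟩ := exists_blockMaxNorm_eq_mul_norm w z
  exact hi ▸ mul_nonneg (hw i) (norm_nonneg _)

end BlockMaxNorm

/-- `x` is an asynchronous iteration of `T`: block `i` is recomputed exactly at the times
`k ∈ K i`, from the values that the blocks `j` had at the information times `s i j k`.
Information times are constrained only at update times, the only times at which they are read. -/
structure IsAsyncIteration {ι : Type*} {E : ι → Type*} (T : (∀ i, E i) → ∀ i, E i)
    (K : ι → Set ℕ) (s : ι → ι → ℕ → ℕ) (x : ℕ → ∀ i, E i) : Prop where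
  zero_mem : ∀ i, 0 ∈ K i
  info_le : ∀ i j, ∀ k ∈ K i, s i j k ≤ k
  update : ∀ k i, k ∈ K i → x (k + 1) i = T (fun j => x (s i j k) j) i
  skip : ∀ k i, k ∉ K i → x (k + 1) i = x k i

namespace IsAsyncIteration

variable {ι : Type*} {E : ι → Type*} {T : (∀ i, E i) → ∀ i, E i} {K : ι → Set ℕ}
  {s : ι → ι → ℕ → ℕ} {x : ℕ → ∀ i, E i}

theorem succ_eq_of_isGreatest (hx : IsAsyncIteration T K s x) {i : ι} {k κ : ℕ}
    (hκ : IsGreatest (K i ∩ Set.Iic k) κ) :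
    x (k + 1) i = T (fun j => x (s i j κ) j) i := by
  have hconst : ∀ l, κ ≤ l → l ≤ k → x (l + 1) i = x (κ + 1) i := by
    intro l hκl
    induction l, hκl using Nat.le_induction with
    | base => exact fun _ => rfl
    | succ l hκl ih =>
      intro hlk
      have hl : l + 1 ∉ K i := fun hl => absurd (hκ.2 ⟨hl, hlk⟩) (by omega)
      rw [hx.skip _ _ hl, ih (by omega)]
  rw [hconst k hκ.1.2 le_rfl, hx.update κ i hκ.1.1]

theorem exists_blockMaxNorm_succ_sub_le [Fintype ι] [Nonempty ι]
    [∀ i, SeminormedAddGroup (E i)] (hx : IsAsyncIteration T K s x) {w : ι → ℝ} {c : ℝ}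
    (hc0 : 0 ≤ c) {xstar : ∀ i, E i}
    (hcontr : ∀ z, blockMaxNorm w (T z - xstar) ≤ c * blockMaxNorm w (z - xstar)) {B D : ℕ}
    (hgap : ∀ i k, ∃ κ ∈ K i, k ≤ κ ∧ κ ≤ k + B)
    (hdelay : ∀ i j, ∀ k ∈ K i, k - D ≤ s i j k) (k : ℕ) :
    ∃ l ≤ k, k ≤ l + (B + D) ∧
      blockMaxNorm w (x (k + 1) - xstar) ≤ c * blockMaxNorm w (x l - xstar) := by
  obtain ⟨i, hi⟩ := exists_blockMaxNorm_eq_mul_norm w (x (k + 1) - xstar)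
  obtain ⟨κ, hκ, hkκ⟩ := exists_isGreatest_inter_Iic_and_le_add (hx.zero_mem i) (hgap i) k
  have hκK : κ ∈ K i := hκ.1.1
  have hκk : κ ≤ k := hκ.1.2
  set z : ∀ j, E j := fun j => x (s i j κ) j
  obtain ⟨j, hj⟩ := exists_blockMaxNorm_eq_mul_norm w (z - xstar)
  have hsκ := hx.info_le i j κ hκK
  have hκs := hdelay i j κ hκK
  refine ⟨s i j κ, by omega, by omega, ?_⟩
  calc blockMaxNorm w (x (k + 1) - xstar)
      = w i * ‖(T z - xstar) i‖ := by
        rw [hi, Pi.sub_apply, Pi.sub_apply, hx.succ_eq_of_isGreatest hκ]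
    _ ≤ blockMaxNorm w (T z - xstar) := mul_norm_le_blockMaxNorm w _ i
    _ ≤ c * blockMaxNorm w (z - xstar) := hcontr z
    _ = c * (w j * ‖(x (s i j κ) - xstar) j‖) := by rw [hj]; rfl
    _ ≤ c * blockMaxNorm w (x (s i j κ) - xstar) := by
        gcongr
        exact mul_norm_le_blockMaxNorm w _ j

end IsAsyncIteration

theorem async_pseudocontraction_partial_asynchronism_general {ι : Type*} [Fintype ι] [Nonempty ι]
    {E : ι → Type*} [∀ i, SeminormedAddGroup (E i)] {w : ι → ℝ} (hw : ∀ i, 0 ≤ w i)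
    {T : (∀ i, E i) → ∀ i, E i} {c : ℝ} (hc0 : 0 < c) (hc1 : c ≤ 1) {xstar : ∀ i, E i}
    (hcontr : ∀ z, blockMaxNorm w (T z - xstar) ≤ c * blockMaxNorm w (z - xstar))
    {K : ι → Set ℕ} {s : ι → ι → ℕ → ℕ} {x : ℕ → ∀ i, E i} (hx : IsAsyncIteration T K s x)
    {B D : ℕ} (hgap : ∀ i k, ∃ κ ∈ K i, k ≤ κ ∧ κ ≤ k + B)
    (hdelay : ∀ i j, ∀ k ∈ K i, k - D ≤ s i j k) (k : ℕ) :
    blockMaxNorm w (x k - xstar) ≤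
      c ^ ((k : ℝ) / ((B : ℝ) + (D : ℝ) + 1)) * blockMaxNorm w (x 0 - xstar) := by
  refine le_rpow_div_mul_of_forall_exists_le_mul (V := fun k => blockMaxNorm w (x k - xstar))
    hc0 hc1 (blockMaxNorm_nonneg hw _) (fun k => ?_) k
  obtain ⟨l, hlk, hkl, hle⟩ := hx.exists_blockMaxNorm_succ_sub_le hc0.le hcontr hgap hdelay k
  have hkl' : (k : ℝ) ≤ l + (B + D) := by exact_mod_cast hkl
  exact ⟨l, hlk, by linarith, hle⟩

/-- Theorem 6 (partial asynchronism): under bounded update intervals (`Bnd`)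
and bounded delays (`Dnd`), the asynchronous iterates of a block-maximum-norm
pseudo-contraction with modulus `c` satisfy
`‖x_k − x⋆‖ ≤ c^{k/(B+D+1)} ‖x_0 − x⋆‖` in the block-maximum norm, where the
exponent is a real power (`Real.rpow`).  Each block is a finite-dimensional
real normed space; `k - Dnd` uses truncated natural subtraction. -/
theorem async_pseudocontraction_partial_asynchronism
    {m : ℕ} (hm : 0 < m)
    (Bl : Fin m → Type*) [∀ i, NormedAddCommGroup (Bl i)]
    [∀ i, NormedSpace ℝ (Bl i)] [∀ i, FiniteDimensional ℝ (Bl i)]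
    (w : Fin m → ℝ) (hw : ∀ i, 0 < w i)
    (bmNorm : (∀ i, Bl i) → ℝ)
    (hbm : ∀ z : ∀ i, Bl i, bmNorm z =
      (Finset.univ : Finset (Fin m)).sup'
        (Finset.univ_nonempty_iff.mpr ⟨⟨0, hm⟩⟩) (fun i => w i * ‖z i‖))
    (T : (∀ i, Bl i) → (∀ i, Bl i))
    (c : ℝ) (hc0 : 0 < c) (hc1 : c < 1)
    (xstar : ∀ i, Bl i) (hfix : T xstar = xstar)
    (hcontr : ∀ z, bmNorm (T z - xstar) ≤ c * bmNorm (z - xstar))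
    (K : Fin m → Set ℕ) (hK0 : ∀ i, 0 ∈ K i)
    (s : Fin m → Fin m → ℕ → ℕ)
    (hs_le : ∀ i j k, s i j k ≤ k)
    (x : ℕ → ∀ i, Bl i)
    (hupd : ∀ k : ℕ, ∀ i, k ∈ K i → x (k + 1) i = T (fun j => x (s i j k) j) i)
    (hskip : ∀ k : ℕ, ∀ i, k ∉ K i → x (k + 1) i = x k i)
    (Bnd Dnd : ℕ)
    (hupd_freq : ∀ i, ∀ k : ℕ, ∃ κ ∈ K i, k ≤ κ ∧ κ ≤ k + Bnd)
    (hdelay : ∀ i j, ∀ k ∈ K i, k - Dnd ≤ s i j k)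
    (hown : ∀ i, ∀ k ∈ K i, s i i k = k) :
    ∀ k : ℕ, bmNorm (x k - xstar) ≤
      c ^ ((k : ℝ) / ((Bnd : ℝ) + (Dnd : ℝ) + 1)) * bmNorm (x 0 - xstar) := by
  have : Nonempty (Fin m) := ⟨⟨0, hm⟩⟩
  obtain rfl : bmNorm = blockMaxNorm w := funext hbm
  exact async_pseudocontraction_partial_asynchronism_general (fun i => (hw i).le) hc0 hc1.le hcontr
    ⟨hK0, fun i j k _ => hs_le i j k, hupd, hskip⟩ hupd_freq hdelay
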